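/- Let 0 < γ < 1/2, Q(x,y) = |y|^γ, and let Ω ⊆ [a,b] × [c,d] be an open set with 0 < a < b, 0 ≤ c < d ≤ 2γ. Then with F_t(x,y) = (x, y + t x), one has (d/dt)|_{t=0} ∫_{F_{−t}(Ω)} Q(z)² dz ≤ −a · ∫_Ω Q(z)² dz. -/

import Mathlib

open Real MeasureTheory

lemma abs_abs_sub_rpow_sub_rpow_le {p y : ℝ} (hp0 : 0 ≤ p) (hp1 : p ≤ 1) (hy : 0 < y) (s : ℝ) :
    |(|y - s|) ^ p - y ^ p| ≤ y ^ (p - 1) * |s| := by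
  have unit_bound : ∀ v : ℝ, 0 ≤ v → |v ^ p - 1| ≤ |v - 1| := by
    intro v hv
    rcases le_total v 1 with h | h
    · have h1 : v ^ p ≤ 1 := rpow_le_one hv h hp0
      have h2 : v ≤ v ^ p := self_le_rpow_of_le_one hv h hp1
      rw [abs_of_nonpos (by linarith), abs_of_nonpos (by linarith)]
      linarith
    · have h1 : 1 ≤ v ^ p := one_le_rpow h hp0
      have h2 : v ^ p ≤ v := rpow_le_self_of_one_le h hp1
      rw [abs_of_nonneg (by linarith), abs_of_nonneg (by linarith)]
      linarith
  have hyp : 0 < y ^ p := rpow_pos_of_pos hy p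
  have hfactor : |y - s| = y * |1 - s / y| := by
    rw [← abs_of_pos hy, ← abs_mul, abs_of_pos hy]
    congr 1
    field_simp
  have hdist : |(|1 - s / y|) - 1| ≤ |s| / y := by
    have := abs_abs_sub_abs_le_abs_sub (1 - s / y) 1
    rwa [abs_one, sub_sub_cancel_left, abs_neg, abs_div, abs_of_pos hy] at this
  calc |(|y - s|) ^ p - y ^ p|
      = y ^ p * |(|1 - s / y|) ^ p - 1| := by
        rw [hfactor, mul_rpow hy.le (abs_nonneg _), ← abs_of_pos hyp, ← abs_mul, abs_of_pos hyp]
        congr 1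
        ring
    _ ≤ y ^ p * (|s| / y) := by
        gcongr
        exact (unit_bound _ (abs_nonneg _)).trans hdist
    _ = y ^ (p - 1) * |s| := by
        rw [rpow_sub_one hy.ne']
        ring

lemma hasDerivAt_abs_sub_mul_rpow {p y : ℝ} (hy : 0 < y) (x : ℝ) :
    HasDerivAt (fun t : ℝ => |y - t * x| ^ p) (-(p * x * y ^ (p - 1))) 0 := by
  have hlin : HasDerivAt (fun t : ℝ => y - t * x) (-x) 0 := by
    simpa using ((hasDerivAt_id (0 : ℝ)).mul_const x).const_sub y
  have hpow := hlin.rpow_const (p := p) (Or.inl (by simpa using hy.ne'))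
  have hpos : ∀ᶠ t in nhds (0 : ℝ), 0 < y - t * x :=
    hlin.continuousAt.eventually (lt_mem_nhds (by simpa using hy))
  refine (hpow.congr_of_eventuallyEq ?_).congr_deriv ?_
  · filter_upwards [hpos] with t ht
    rw [abs_of_pos ht]
  · simp only [zero_mul, sub_zero]
    ring

lemma measurePreserving_vertical_shear (s : ℝ) :
    MeasurePreserving (fun z : ℝ × ℝ => (z.1, z.2 + s * z.1)) := by
  refine (MeasurePreserving.id (volume : Measure ℝ)).skew_product
    (g := fun x y => y + s * x) (by fun_prop) ?_
  exact Filter.Eventually.of_forall fun x => (measurePreserving_add_right volume (s * x)).map_eq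

lemma measurableEmbedding_vertical_shear (s : ℝ) :
    MeasurableEmbedding (fun z : ℝ × ℝ => (z.1, z.2 + s * z.1)) := by
  refine Continuous.measurableEmbedding (by fun_prop) ?_
  rintro ⟨x, y⟩ ⟨x', y'⟩ h
  simp only [Prod.mk.injEq] at h
  obtain ⟨rfl, h⟩ := h
  simpa using h

lemma integrableOn_prod_Ioo_snd_rpow {q : ℝ} (hq : -1 < q) (a b c d : ℝ) :
    IntegrableOn (fun z : ℝ × ℝ => z.2 ^ q) (Set.Ioo a b ×ˢ Set.Ioo c d) := by
  have hsnd : IntegrableOn (fun y : ℝ => y ^ q) (Set.Ioo c d) :=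
    ((intervalIntegral.intervalIntegrable_rpow' hq (a := c) (b := d)).1).mono_set
      Set.Ioo_subset_Ioc_self
  have hfst : IntegrableOn (fun _ : ℝ => (1 : ℝ)) (Set.Ioo a b) :=
    integrableOn_const (by simp)
  rw [IntegrableOn, Measure.volume_eq_prod, ← Measure.prod_restrict]
  simpa using hfst.integrable.mul_prod hsnd.integrable

/-- The integral of `|y| ^ p` over the sheared domain is differentiable at `t = 0`. -/
lemma hasDerivAt_setIntegral_vertical_shear {p a b c d : ℝ} (hp0 : 0 < p) (hp1 : p ≤ 1)
    (ha : 0 ≤ a) (hc : 0 ≤ c) {Ω : Set (ℝ × ℝ)} (hΩm : MeasurableSet Ω)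
    (hΩ : Ω ⊆ Set.Ioo a b ×ˢ Set.Ioo c d) :
    IntegrableOn (fun z : ℝ × ℝ => p * z.1 * z.2 ^ (p - 1)) Ω ∧
    HasDerivAt (fun t : ℝ => ∫ z in (fun z : ℝ × ℝ => (z.1, z.2 + (-t) * z.1)) '' Ω, |z.2| ^ p)
      (-∫ z in Ω, p * z.1 * z.2 ^ (p - 1)) 0 := by
  have hcov : (fun t : ℝ => ∫ z in (fun z : ℝ × ℝ => (z.1, z.2 + (-t) * z.1)) '' Ω, |z.2| ^ p)
      = fun t : ℝ => ∫ z in Ω, |z.2 - t * z.1| ^ p := by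
    funext t
    rw [(measurePreserving_vertical_shear (-t)).setIntegral_image_emb
      (measurableEmbedding_vertical_shear (-t))]
    simp only [neg_mul, ← sub_eq_add_neg]
  have hbound : IntegrableOn (fun z : ℝ × ℝ => z.2 ^ (p - 1) * b) Ω :=
    ((integrableOn_prod_Ioo_snd_rpow (by linarith) a b c d).mono_set hΩ).mul_const b
  have hF0 : IntegrableOn (fun z : ℝ × ℝ => |z.2 - 0 * z.1| ^ p) Ω := by
    refine ((integrableOn_prod_Ioo_snd_rpow (q := p) (by linarith) a b c d).mono_set hΩ).congr_fun
      (fun z hz => ?_) hΩm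
    have hy : 0 < z.2 := hc.trans_lt (hΩ hz).2.1
    simp [abs_of_pos hy]
  have hF'meas : Measurable (fun z : ℝ × ℝ =>
      ContinuousLinearMap.toSpanSingleton ℝ (-(p * z.1 * z.2 ^ (p - 1)))) :=
    (ContinuousLinearMap.toSpanSingletonCLE (𝕜 := ℝ) (E := ℝ)).continuous.measurable.comp
      (by fun_prop)
  have key := hasFDerivAt_integral_of_dominated_loc_of_lip' (𝕜 := ℝ) (μ := volume.restrict Ω)
    (F := fun (t : ℝ) (z : ℝ × ℝ) => |z.2 - t * z.1| ^ p) (x₀ := 0)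
    (F' := fun z => ContinuousLinearMap.toSpanSingleton ℝ (-(p * z.1 * z.2 ^ (p - 1))))
    (bound := fun z => z.2 ^ (p - 1) * b) (Filter.univ_mem)
    (fun t _ => (by fun_prop : Measurable fun z : ℝ × ℝ => |z.2 - t * z.1| ^ p).aestronglyMeasurable)
    hF0 hF'meas.aestronglyMeasurable
    (by
      filter_upwards [ae_restrict_mem hΩm] with z hz t _
      obtain ⟨⟨hxa, hxb⟩, hyc, -⟩ := hΩ hz
      have hy : 0 < z.2 := hc.trans_lt hyc
      have hx : 0 < z.1 := ha.trans_lt hxa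
      have h := abs_abs_sub_rpow_sub_rpow_le hp0.le hp1 hy (t * z.1)
      simp only [zero_mul, sub_zero, abs_of_pos hy, Real.norm_eq_abs]
      refine h.trans ?_
      rw [abs_mul, abs_of_pos hx, mul_assoc, mul_comm b]
      gcongr)
    hbound
    (by
      filter_upwards [ae_restrict_mem hΩm] with z hz
      exact (hasDerivAt_abs_sub_mul_rpow (hc.trans_lt (hΩ hz).2.1) z.1).hasFDerivAt)
  have hint : IntegrableOn (fun z : ℝ × ℝ => p * z.1 * z.2 ^ (p - 1)) Ω := by
    simpa [IntegrableOn] using (key.1.apply_continuousLinearMap (1 : ℝ)).neg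
  refine ⟨hint, ?_⟩
  rw [hcov]
  refine key.2.hasDerivAt.congr_deriv ?_
  rw [ContinuousLinearMap.integral_apply key.1]
  simp [integral_neg]

/-- decrease estimate, `0 < γ < 1/2`: with `Q(x,y) = |y|^γ`,
`Ω ⊆ [a,b]×[c,d]` open, `0 < a < b`, `0 ≤ c < d ≤ 2γ`, and
`F_{−t}(Ω) = {(x, y − t x) : (x,y) ∈ Ω}`,
`(d/dt)|_{t=0} ∫_{F_{−t}(Ω)} Q² ≤ −a ∫_Ω Q²`. -/
theorem stmt_6 (γ a b c d : ℝ) (hγ0 : 0 < γ) (hγ : γ < 1 / 2) (ha : 0 < a) (hab : a < b)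
    (hc : 0 ≤ c) (hcd : c < d) (hd : d ≤ 2 * γ)
    (Ω : Set (ℝ × ℝ)) (hΩopen : IsOpen Ω) (hΩ : Ω ⊆ Set.Icc a b ×ˢ Set.Icc c d) :
    deriv (fun t : ℝ =>
        ∫ z in (fun z : ℝ × ℝ => (z.1, z.2 + (-t) * z.1)) '' Ω, (|z.2| ^ γ) ^ 2) 0
      ≤ -a * ∫ z in Ω, (|z.2| ^ γ) ^ 2 := by
  have hsq : ∀ y : ℝ, (|y| ^ γ) ^ 2 = |y| ^ (2 * γ) := fun y => by
    rw [← rpow_mul_natCast (abs_nonneg y), mul_comm γ]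
    norm_num
  simp only [hsq]
  have hΩ' : Ω ⊆ Set.Ioo a b ×ˢ Set.Ioo c d := by
    simpa only [interior_prod_eq, interior_Icc] using interior_maximal hΩ hΩopen
  have hΩm := hΩopen.measurableSet
  obtain ⟨hint, hderiv⟩ := hasDerivAt_setIntegral_vertical_shear (p := 2 * γ) (by linarith)
    (by linarith) ha.le hc hΩm hΩ'
  rw [hderiv.deriv, neg_mul, neg_le_neg_iff, ← integral_const_mul]
  refine setIntegral_mono_on ?_ hint hΩm fun z hz => ?_
  · refine IntegrableOn.congr_fun (((integrableOn_prod_Ioo_snd_rpow (q := 2 * γ) (by linarith)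
      a b c d).mono_set hΩ').const_mul a) (fun z hz => ?_) hΩm
    simp only [abs_of_pos (hc.trans_lt (hΩ' hz).2.1)]
  · obtain ⟨⟨hxa, -⟩, hyc, hyd⟩ := hΩ' hz
    have hy : 0 < z.2 := hc.trans_lt hyc
    have hpow : z.2 ^ (2 * γ) = z.2 * z.2 ^ (2 * γ - 1) := by
      rw [rpow_sub_one hy.ne']
      field_simp
    rw [abs_of_pos hy, hpow, ← mul_assoc, mul_comm (2 * γ)]
    gcongr
    · exact ha.le.trans hxa.le
    · exact hyd.le.trans hd
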